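/- Let (C, ≤_l, ≤_r) be a local biordered Ehresmann category. Define S(C) with underlying set C, product x ⊗ y = (x|e) ∘ (e|y) defined whenever e = D(x) ∧ R(y) is defined, and unary operations x⁺ = R(x) and x* = D(x). Then (S(C), ⊗, +, *) is a two-sided Ehresmann semigroupoid. -/

import Mathlib

/-! The objects of `Cat` split into classes on which the meet is everywhere defined: `mdef` is
symmetric and, by Exel associativity and commutativity, transitive on `Cat.obj`. Since
`D(x ⊗ y) ≤ D(y)` and `R(x ⊗ y) ≤ R(x)`, all definedness conditions in the associativity axioms
reduce to `D(s) ~ R(t)` and `D(t) ~ R(r)`.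

For the associativity equation put `e = D(x) ∧ R(y)` and `h = D(y) ∧ R(z)`. Restrictions and
corestrictions distribute over compositions (`res_comp`, `cores_comp`), so
`(x ⊗ y) ⊗ z = x|g ∘ (e|y)|f ∘ f|z` with `f = D(e|y) ∧ R(z)`, `g = R((e|y)|f)`, and
`x ⊗ (y ⊗ z) = x|k ∘ k|(y|h) ∘ m|z` with `k = D(x) ∧ R(y|h)`, `m = D(k|(y|h))`. The two middle
factors agree (`middle_eq`): (ec6) gives `(e|y)|f ≤_l y|h` and (ec7) gives `k|(y|h) ≤_r e|y`,
whence `g ≤ k` and `m ≤ f`; the latter makes `k|(y|h)` a restriction of `(e|y)|f`, so `k ≤ g`.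

The remaining axioms follow from `e ⊗ y = (e ∧ R(y))|y` and `x ⊗ e = x|(D(x) ∧ e)` for
objects `e`. -/

universe u

/-- A semigroupoid (Exel): a partially defined binary operation, associative in Exel's sense.
`defined s t` means the product `s ⋆ t` is defined; `mul` is a total function whose value is
only meaningful on defined pairs. -/
structure Semigroupoid (S : Type u) where
  defined : S → S → Prop
  mul : S → S → S
  assoc₁ : ∀ s t r, defined s t → defined t r →
    defined (mul s t) r ∧ defined s (mul t r) ∧ mul (mul s t) r = mul s (mul t r)
  assoc₂ : ∀ s t r, defined s t → defined (mul s t) r →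
    defined t r ∧ defined s (mul t r) ∧ mul (mul s t) r = mul s (mul t r)
  assoc₃ : ∀ s t r, defined t r → defined s (mul t r) →
    defined s t ∧ defined (mul s t) r ∧ mul (mul s t) r = mul s (mul t r)

/-- A left Ehresmann semigroupoid. -/
structure LeftEhresmannSgpd (S : Type u) extends Semigroupoid S where
  plus : S → S
  le1 : ∀ s, defined (plus s) s ∧ mul (plus s) s = s
  le2 : ∀ s t, defined (plus s) (plus t) →
    defined (plus t) (plus s) ∧ mul (plus s) (plus t) = mul (plus t) (plus s)
  le3 : ∀ s t, defined (plus s) (plus t) → mul (plus s) (plus t) = plus (mul (plus s) t)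
  le4 : ∀ s t, defined s t → plus (mul s t) = plus (mul s (plus t))

/-- The set of projections `S⁺ = {s⁺ : s ∈ S}`. -/
def LeftEhresmannSgpd.projections {S : Type u} (E : LeftEhresmannSgpd S) : Set S :=
  {e | ∃ s, e = E.plus s}

/-- The relation `s ≤_l t` : `s⁺t` is defined and `s⁺t = s`. -/
def LeftEhresmannSgpd.lel {S : Type u} (E : LeftEhresmannSgpd S) (s t : S) : Prop :=
  E.defined (E.plus s) t ∧ E.mul (E.plus s) t = s

/-- A two-sided Ehresmann semigroupoid. -/
structure EhresmannSgpd (S : Type u) extends Semigroupoid S where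
  plus : S → S
  star : S → S
  le1 : ∀ s, defined (plus s) s ∧ mul (plus s) s = s
  le2 : ∀ s t, defined (plus s) (plus t) →
    defined (plus t) (plus s) ∧ mul (plus s) (plus t) = mul (plus t) (plus s)
  le3 : ∀ s t, defined (plus s) (plus t) → mul (plus s) (plus t) = plus (mul (plus s) t)
  le4 : ∀ s t, defined s t → plus (mul s t) = plus (mul s (plus t))
  re1 : ∀ s, defined s (star s) ∧ mul s (star s) = s
  re2 : ∀ s t, defined (star s) (star t) →
    defined (star t) (star s) ∧ mul (star s) (star t) = mul (star t) (star s)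
  re3 : ∀ s t, defined (star s) (star t) → mul (star s) (star t) = star (mul s (star t))
  re4 : ∀ s t, defined s t → star (mul s t) = star (mul (star s) t)
  plus_star : ∀ s, star (plus s) = plus s
  star_plus : ∀ s, plus (star s) = star s

/-- The set of projections `U = S⁺ = S*`. -/
def EhresmannSgpd.projections {S : Type u} (E : EhresmannSgpd S) : Set S :=
  {e | ∃ s, e = E.plus s}

/-- `s ≤_l t` : `s⁺t` is defined and `s⁺t = s`. -/
def EhresmannSgpd.lel {S : Type u} (E : EhresmannSgpd S) (s t : S) : Prop :=
  E.defined (E.plus s) t ∧ E.mul (E.plus s) t = s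

/-- `s ≤_r t` : `ts*` is defined and `ts* = s`. -/
def EhresmannSgpd.ler {S : Type u} (E : EhresmannSgpd S) (s t : S) : Prop :=
  E.defined t (E.star s) ∧ E.mul t (E.star s) = s

/-- A two-sided restriction semigroupoid. -/
structure RestrictionSgpd (S : Type u) extends Semigroupoid S where
  plus : S → S
  star : S → S
  lr1 : ∀ s, defined (plus s) s ∧ mul (plus s) s = s
  lr2 : ∀ s t, defined (plus s) (plus t) →
    defined (plus t) (plus s) ∧ mul (plus s) (plus t) = mul (plus t) (plus s)
  lr3 : ∀ s t, defined (plus s) (plus t) → mul (plus s) (plus t) = plus (mul (plus s) t)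
  lr4 : ∀ s t, defined s t →
    defined (plus (mul s t)) s ∧ mul s (plus t) = mul (plus (mul s t)) s
  rr1 : ∀ s, defined s (star s) ∧ mul s (star s) = s
  rr2 : ∀ s t, defined (star s) (star t) →
    defined (star t) (star s) ∧ mul (star s) (star t) = mul (star t) (star s)
  rr3 : ∀ s t, defined (star s) (star t) → mul (star s) (star t) = star (mul s (star t))
  rr4 : ∀ s t, defined s t →
    defined t (star (mul s t)) ∧ mul (star s) t = mul t (star (mul s t))
  plus_star : ∀ s, star (plus s) = plus s
  star_plus : ∀ s, plus (star s) = star s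

/-- The set of projections of a restriction semigroupoid. -/
def RestrictionSgpd.projections {S : Type u} (R : RestrictionSgpd S) : Set S :=
  {e | ∃ s, e = R.plus s}

/-- The natural partial order of a restriction semigroupoid: `s ≤ t` iff `s⁺t = s`. -/
def RestrictionSgpd.natLe {S : Type u} (R : RestrictionSgpd S) (s t : S) : Prop :=
  R.defined (R.plus s) t ∧ R.mul (R.plus s) t = s

/-- A local meet-semilattice: a commutative semigroupoid in which every element is idempotent. -/
structure LocalMeetSemilattice (S : Type u) extends Semigroupoid S where
  idem_def : ∀ e, defined e e
  idem : ∀ e, mul e e = e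
  comm_def : ∀ e f, defined e f → defined f e
  comm : ∀ e f, defined e f → mul e f = mul f e

/-- A local biordered Ehresmann category. -/
structure LBEC (C : Type u) where
  obj : Set C
  dom : C → C
  cod : C → C
  comp : C → C → C
  dom_mem : ∀ x, dom x ∈ obj
  cod_mem : ∀ x, cod x ∈ obj
  dom_comp : ∀ x y, dom x = cod y → dom (comp x y) = dom y
  cod_comp : ∀ x y, dom x = cod y → cod (comp x y) = cod x
  comp_assoc : ∀ x y z, dom x = cod y → dom y = cod z →
    comp (comp x y) z = comp x (comp y z)
  dom_obj : ∀ e, e ∈ obj → dom e = e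
  cod_obj : ∀ e, e ∈ obj → cod e = e
  comp_id : ∀ x e, e ∈ obj → dom x = e → comp x e = x
  id_comp : ∀ y e, e ∈ obj → cod y = e → comp e y = y
  lel : C → C → Prop
  ler : C → C → Prop
  lel_refl : ∀ x, lel x x
  lel_antisymm : ∀ x y, lel x y → lel y x → x = y
  lel_trans : ∀ x y z, lel x y → lel y z → lel x z
  ler_refl : ∀ x, ler x x
  ler_antisymm : ∀ x y, ler x y → ler y x → x = y
  ler_trans : ∀ x y z, ler x y → ler y z → ler x z
  lel_dom : ∀ x y, lel x y → lel (dom x) (dom y)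
  lel_cod : ∀ x y, lel x y → lel (cod x) (cod y)
  ler_dom : ∀ x y, ler x y → ler (dom x) (dom y)
  ler_cod : ∀ x y, ler x y → ler (cod x) (cod y)
  lel_comp : ∀ x y x' y', lel x y → lel x' y' → dom x = cod x' → dom y = cod y' →
    lel (comp x x') (comp y y')
  ler_comp : ∀ x y x' y', ler x y → ler x' y' → dom x = cod x' → dom y = cod y' →
    ler (comp x x') (comp y y')
  cores : C → C → C
  cores_le : ∀ e x, e ∈ obj → lel e (cod x) → lel (cores e x) x
  cod_cores : ∀ e x, e ∈ obj → lel e (cod x) → cod (cores e x) = e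
  cores_unique : ∀ e x y, e ∈ obj → lel e (cod x) → lel y x → cod y = e → y = cores e x
  res : C → C → C
  res_le : ∀ x e, e ∈ obj → ler e (dom x) → ler (res x e) x
  dom_res : ∀ x e, e ∈ obj → ler e (dom x) → dom (res x e) = e
  res_unique : ∀ x e y, e ∈ obj → ler e (dom x) → ler y x → dom y = e → y = res x e
  mdef : C → C → Prop
  meet : C → C → C
  meet_mem : ∀ e f, e ∈ obj → f ∈ obj → mdef e f → meet e f ∈ obj
  mdef_self : ∀ e, e ∈ obj → mdef e e
  meet_self : ∀ e, e ∈ obj → meet e e = e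
  mdef_comm : ∀ e f, e ∈ obj → f ∈ obj → mdef e f → mdef f e
  meet_comm : ∀ e f, e ∈ obj → f ∈ obj → mdef e f → meet e f = meet f e
  meet_assoc₁ : ∀ e f g, e ∈ obj → f ∈ obj → g ∈ obj → mdef e f → mdef f g →
    mdef (meet e f) g ∧ mdef e (meet f g) ∧ meet (meet e f) g = meet e (meet f g)
  meet_assoc₂ : ∀ e f g, e ∈ obj → f ∈ obj → g ∈ obj → mdef e f → mdef (meet e f) g →
    mdef f g ∧ mdef e (meet f g) ∧ meet (meet e f) g = meet e (meet f g)
  meet_assoc₃ : ∀ e f g, e ∈ obj → f ∈ obj → g ∈ obj → mdef f g → mdef e (meet f g) →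
    mdef e f ∧ mdef (meet e f) g ∧ meet (meet e f) g = meet e (meet f g)
  ec4l : ∀ e f, e ∈ obj → f ∈ obj → (lel e f ↔ mdef e f ∧ meet e f = e)
  ec4r : ∀ e f, e ∈ obj → f ∈ obj → (ler e f ↔ mdef e f ∧ meet e f = e)
  ec5 : ∀ x z, (∃ y, lel x y ∧ ler y z) ↔ (∃ y, ler x y ∧ lel y z)
  ec6 : ∀ x y e, e ∈ obj → lel x y → mdef (dom x) e →
    lel (res x (meet (dom x) e)) (res y (meet (dom y) e))
  ec7 : ∀ x y e, e ∈ obj → ler x y → mdef e (cod x) →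
    ler (cores (meet e (cod x)) x) (cores (meet e (cod y)) y)

/-- `x ⊗ y` is defined iff `D(x) ∧ R(y)` is defined. -/
def LBEC.pdef {C : Type u} (E : LBEC C) (x y : C) : Prop :=
  E.mdef (E.dom x) (E.cod y)

/-- The pseudo-product `x ⊗ y = (x|e) ∘ (e|y)` where `e = D(x) ∧ R(y)`. -/
def LBEC.pprod {C : Type u} (E : LBEC C) (x y : C) : C :=
  E.comp (E.res x (E.meet (E.dom x) (E.cod y))) (E.cores (E.meet (E.dom x) (E.cod y)) y)

/-- A locally inductive category. -/
structure LInductiveCat (C : Type u) where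
  obj : Set C
  dom : C → C
  cod : C → C
  comp : C → C → C
  dom_mem : ∀ x, dom x ∈ obj
  cod_mem : ∀ x, cod x ∈ obj
  dom_comp : ∀ x y, dom x = cod y → dom (comp x y) = dom y
  cod_comp : ∀ x y, dom x = cod y → cod (comp x y) = cod x
  comp_assoc : ∀ x y z, dom x = cod y → dom y = cod z →
    comp (comp x y) z = comp x (comp y z)
  dom_obj : ∀ e, e ∈ obj → dom e = e
  cod_obj : ∀ e, e ∈ obj → cod e = e
  comp_id : ∀ x e, e ∈ obj → dom x = e → comp x e = x
  id_comp : ∀ y e, e ∈ obj → cod y = e → comp e y = y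
  le : C → C → Prop
  le_refl : ∀ x, le x x
  le_antisymm : ∀ x y, le x y → le y x → x = y
  le_trans : ∀ x y z, le x y → le y z → le x z
  le_dom : ∀ x y, le x y → le (dom x) (dom y)
  le_cod : ∀ x y, le x y → le (cod x) (cod y)
  le_comp : ∀ x y x' y', le x y → le x' y' → dom x = cod x' → dom y = cod y' →
    le (comp x x') (comp y y')
  res : C → C → C
  res_le : ∀ x e, e ∈ obj → le e (dom x) → le (res x e) x
  dom_res : ∀ x e, e ∈ obj → le e (dom x) → dom (res x e) = e
  res_unique : ∀ x e y, e ∈ obj → le e (dom x) → le y x → dom y = e → y = res x e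
  cores : C → C → C
  cores_le : ∀ e x, e ∈ obj → le e (cod x) → le (cores e x) x
  cod_cores : ∀ e x, e ∈ obj → le e (cod x) → cod (cores e x) = e
  cores_unique : ∀ e x y, e ∈ obj → le e (cod x) → le y x → cod y = e → y = cores e x
  mdef : C → C → Prop
  meet : C → C → C
  meet_mem : ∀ e f, e ∈ obj → f ∈ obj → mdef e f → meet e f ∈ obj
  mdef_self : ∀ e, e ∈ obj → mdef e e
  meet_self : ∀ e, e ∈ obj → meet e e = e
  mdef_comm : ∀ e f, e ∈ obj → f ∈ obj → mdef e f → mdef f e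
  meet_comm : ∀ e f, e ∈ obj → f ∈ obj → mdef e f → meet e f = meet f e
  meet_assoc₁ : ∀ e f g, e ∈ obj → f ∈ obj → g ∈ obj → mdef e f → mdef f g →
    mdef (meet e f) g ∧ mdef e (meet f g) ∧ meet (meet e f) g = meet e (meet f g)
  meet_assoc₂ : ∀ e f g, e ∈ obj → f ∈ obj → g ∈ obj → mdef e f → mdef (meet e f) g →
    mdef f g ∧ mdef e (meet f g) ∧ meet (meet e f) g = meet e (meet f g)
  meet_assoc₃ : ∀ e f g, e ∈ obj → f ∈ obj → g ∈ obj → mdef f g → mdef e (meet f g) →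
    mdef e f ∧ mdef (meet e f) g ∧ meet (meet e f) g = meet e (meet f g)
  le_meet : ∀ e f, e ∈ obj → f ∈ obj → (le e f ↔ mdef e f ∧ meet e f = e)

/-- `Cat` is the local biordered Ehresmann category `C(S)` associated with the two-sided
Ehresmann semigroupoid `E`. -/
def IsCofS {S : Type u} (E : EhresmannSgpd S) (Cat : LBEC S) : Prop :=
  Cat.obj = E.projections ∧
  Cat.dom = E.star ∧
  Cat.cod = E.plus ∧
  (∀ s t, E.star s = E.plus t → Cat.comp s t = E.mul s t) ∧
  Cat.lel = E.lel ∧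
  Cat.ler = E.ler ∧
  (∀ e f, e ∈ E.projections → f ∈ E.projections →
    (Cat.mdef e f ↔ E.defined e f) ∧ (E.defined e f → Cat.meet e f = E.mul e f))

/-- `E` is the two-sided Ehresmann semigroupoid `S(C)` associated with the local biordered
Ehresmann category `Cat`. -/
def IsSofC {C : Type u} (Cat : LBEC C) (E : EhresmannSgpd C) : Prop :=
  (E.defined = Cat.pdef) ∧
  (∀ x y, E.defined x y → E.mul x y = Cat.pprod x y) ∧
  E.plus = Cat.cod ∧
  E.star = Cat.dom

/-- `L` is the locally inductive category `C(S)` associated with the two-sided restriction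
semigroupoid `R`. -/
def IsCofSRes {S : Type u} (R : RestrictionSgpd S) (L : LInductiveCat S) : Prop :=
  L.obj = R.projections ∧
  L.dom = R.star ∧
  L.cod = R.plus ∧
  (∀ s t, R.star s = R.plus t → L.comp s t = R.mul s t) ∧
  L.le = R.natLe ∧
  (∀ e f, e ∈ R.projections → f ∈ R.projections →
    (L.mdef e f ↔ R.defined e f) ∧ (R.defined e f → L.meet e f = R.mul e f))

/-- `t` is a pseudo-inverse of `s` in the semigroupoid `Sg`. -/
def Semigroupoid.PInv {S : Type u} (Sg : Semigroupoid S) (s t : S) : Prop :=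
  Sg.defined s t ∧ Sg.defined t s ∧ Sg.mul (Sg.mul s t) s = s ∧ Sg.mul (Sg.mul t s) t = t

/-- The restriction semigroupoid `R` is an inverse semigroupoid with `s⁺ = ss⁻¹`, `s* = s⁻¹s`. -/
def RestrictionSgpd.IsInverse {S : Type u} (R : RestrictionSgpd S) : Prop :=
  ∃ inv : S → S,
    (∀ s, R.toSemigroupoid.PInv s (inv s)) ∧
    (∀ s t, R.toSemigroupoid.PInv s t → t = inv s) ∧
    (∀ s, R.plus s = R.mul s (inv s) ∧ R.star s = R.mul (inv s) s)

/-- `y` is an inverse of `x` in the category `L`. -/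
def LInductiveCat.IsInv {C : Type u} (L : LInductiveCat C) (x y : C) : Prop :=
  L.dom y = L.cod x ∧ L.cod y = L.dom x ∧ L.comp x y = L.cod x ∧ L.comp y x = L.dom x

/-- The category `L` is a groupoid: every element has a unique inverse. -/
def LInductiveCat.IsGroupoid {C : Type u} (L : LInductiveCat C) : Prop :=
  ∀ x, ∃! y, L.IsInv x y

/-- Inversion in `L` is order-preserving (condition (ig1) of locally inductive groupoids). -/
def LInductiveCat.InvOrdPres {C : Type u} (L : LInductiveCat C) : Prop :=
  ∀ x y x' y', L.IsInv x x' → L.IsInv y y' → L.le x y → L.le x' y'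

/-- `(S0, D, R)` is a category structure on the semigroupoid `Sg`. -/
def Semigroupoid.CatStructOn {S : Type u} (Sg : Semigroupoid S) (S0 : Set S)
    (D R : S → S) : Prop :=
  (∀ s, D s ∈ S0) ∧ (∀ s, R s ∈ S0) ∧
  (∀ s t, Sg.defined s t ↔ D s = R t) ∧
  (∀ s t, Sg.defined s t → D (Sg.mul s t) = D t ∧ R (Sg.mul s t) = R s) ∧
  (∀ e, e ∈ S0 → D e = e ∧ R e = e) ∧
  (∀ s, Sg.mul s (D s) = s) ∧
  (∀ t, Sg.mul (R t) t = t)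

/-- `(U0, d, r)` is a category structure on the sub-semigroupoid of `Sg` with underlying
set `U`. -/
def Semigroupoid.CatStructOnSubset {S : Type u} (Sg : Semigroupoid S) (U : Set S)
    (U0 : Set S) (d r : S → S) : Prop :=
  U0 ⊆ U ∧
  (∀ e, e ∈ U → d e ∈ U0 ∧ r e ∈ U0) ∧
  (∀ e f, e ∈ U → f ∈ U → (Sg.defined e f ↔ d e = r f)) ∧
  (∀ e f, e ∈ U → f ∈ U → Sg.defined e f →
    d (Sg.mul e f) = d f ∧ r (Sg.mul e f) = r e) ∧
  (∀ e, e ∈ U0 → d e = e ∧ r e = e) ∧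
  (∀ e, e ∈ U → Sg.mul e (d e) = e ∧ Sg.mul (r e) e = e)

/-- A (2,1,1)-morphism between two-sided Ehresmann semigroupoids. -/
def Is211 {S : Type u} {T : Type u} (E : EhresmannSgpd S) (F : EhresmannSgpd T)
    (φ : S → T) : Prop :=
  (∀ s t, E.defined s t →
    F.defined (φ s) (φ t) ∧ φ (E.mul s t) = F.mul (φ s) (φ t)) ∧
  (∀ s, φ (E.plus s) = F.plus (φ s)) ∧
  (∀ s, φ (E.star s) = F.star (φ s))

/-- An inductive functor between local biordered Ehresmann categories. -/
def IndFunctor {C : Type u} {D : Type u} (A : LBEC C) (B : LBEC D) (φ : C → D) : Prop :=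
  (∀ x, φ (A.dom x) = B.dom (φ x)) ∧
  (∀ x, φ (A.cod x) = B.cod (φ x)) ∧
  (∀ x y, A.dom x = A.cod y → φ (A.comp x y) = B.comp (φ x) (φ y)) ∧
  (∀ x y, A.lel x y → B.lel (φ x) (φ y)) ∧
  (∀ x y, A.ler x y → B.ler (φ x) (φ y)) ∧
  (∀ e f, e ∈ A.obj → f ∈ A.obj → A.mdef e f →
    B.mdef (φ e) (φ f) ∧ φ (A.meet e f) = B.meet (φ e) (φ f))

/-- A ∨-premorphism between two-sided restriction semigroupoids. -/
def VPre {S : Type u} {T : Type u} (R1 : RestrictionSgpd S) (R2 : RestrictionSgpd T)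
    (φ : S → T) : Prop :=
  (∀ s t, R1.defined s t →
    R2.defined (φ s) (φ t) ∧ R2.natLe (φ (R1.mul s t)) (R2.mul (φ s) (φ t))) ∧
  (∀ s, φ (R1.plus s) = R2.plus (φ s)) ∧
  (∀ s, φ (R1.star s) = R2.star (φ s))

/-- An ordered functor between locally inductive categories. -/
def OrdFunctor {C : Type u} {D : Type u} (A : LInductiveCat C) (B : LInductiveCat D)
    (φ : C → D) : Prop :=
  (∀ x, φ (A.dom x) = B.dom (φ x)) ∧
  (∀ x, φ (A.cod x) = B.cod (φ x)) ∧
  (∀ x y, A.dom x = A.cod y → φ (A.comp x y) = B.comp (φ x) (φ y)) ∧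
  (∀ x y, A.le x y → B.le (φ x) (φ y))

/-- Composition of binary relations on `X`. -/
def rcomp {X : Type u} (R S : Set (X × X)) : Set (X × X) :=
  {p | ∃ z, (p.1, z) ∈ R ∧ (z, p.2) ∈ S}

/-- `R⁺ = {(x,x) : (x,y) ∈ R for some y}`. -/
def rplus {X : Type u} (R : Set (X × X)) : Set (X × X) :=
  {p | p.1 = p.2 ∧ ∃ y, (p.1, y) ∈ R}

/-- `R* = {(y,y) : (x,y) ∈ R for some x}`. -/
def rstar {X : Type u} (R : Set (X × X)) : Set (X × X) :=
  {p | p.1 = p.2 ∧ ∃ x, (x, p.2) ∈ R}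

namespace LBEC

variable {C : Type u} (E : LBEC C)

/-! ### The local meet-semilattice of objects -/

theorem mdef_trans {e f g : C} (he : e ∈ E.obj) (hf : f ∈ E.obj) (hg : g ∈ E.obj)
    (h₁ : E.mdef e f) (h₂ : E.mdef f g) : E.mdef e g := by
  have h := (E.meet_assoc₁ e f g he hf hg h₁ h₂).1
  rw [E.meet_comm e f he hf h₁] at h
  exact (E.meet_assoc₂ f e g hf he hg (E.mdef_comm e f he hf h₁) h).1

/-- The two orders agree on objects. -/
theorem lel_iff_ler {e f : C} (he : e ∈ E.obj) (hf : f ∈ E.obj) : E.lel e f ↔ E.ler e f :=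
  (E.ec4l e f he hf).trans (E.ec4r e f he hf).symm

theorem mdef_of_ler {e f : C} (he : e ∈ E.obj) (hf : f ∈ E.obj) (h : E.ler e f) : E.mdef e f :=
  ((E.ec4r e f he hf).1 h).1

theorem meet_ler_right {e f : C} (he : e ∈ E.obj) (hf : f ∈ E.obj) (h : E.mdef e f) :
    E.ler (E.meet e f) f := by
  have hff := E.mdef_self f hf
  have h' := E.meet_assoc₁ e f f he hf hf h hff
  rw [E.meet_self f hf] at h'
  exact (E.ec4r _ _ (E.meet_mem e f he hf h) hf).2 ⟨h'.1, h'.2.2⟩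

theorem meet_ler_left {e f : C} (he : e ∈ E.obj) (hf : f ∈ E.obj) (h : E.mdef e f) :
    E.ler (E.meet e f) e := by
  rw [E.meet_comm e f he hf h]
  exact E.meet_ler_right hf he (E.mdef_comm e f he hf h)

theorem ler_meet {d e f : C} (hd : d ∈ E.obj) (he : e ∈ E.obj) (hf : f ∈ E.obj)
    (h : E.mdef e f) (h₁ : E.ler d e) (h₂ : E.ler d f) : E.ler d (E.meet e f) := by
  obtain ⟨d₁, m₁⟩ := (E.ec4r d e hd he).1 h₁
  obtain ⟨-, m₂⟩ := (E.ec4r d f hd hf).1 h₂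
  obtain ⟨-, h₄, h₅⟩ := E.meet_assoc₁ d e f hd he hf d₁ h
  refine (E.ec4r _ _ hd (E.meet_mem e f he hf h)).2 ⟨h₄, ?_⟩
  rw [← h₅, m₁, m₂]

/-! ### Restrictions and corestrictions -/

/-- `(x ∘ y)|f = x|R(y|f) ∘ y|f`. -/
theorem res_comp {x y f : C} (h : E.dom x = E.cod y) (hf : f ∈ E.obj) (hfy : E.ler f (E.dom y)) :
    E.res (E.comp x y) f = E.comp (E.res x (E.cod (E.res y f))) (E.res y f) := by
  have h₁ : E.ler (E.cod (E.res y f)) (E.dom x) := by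
    rw [h]; exact E.ler_cod _ _ (E.res_le y f hf hfy)
  have h₂ := E.dom_res x _ (E.cod_mem (E.res y f)) h₁
  refine (E.res_unique _ f _ hf ?_ ?_ ?_).symm
  · rwa [E.dom_comp x y h]
  · exact E.ler_comp _ _ _ _ (E.res_le x _ (E.cod_mem _) h₁) (E.res_le y f hf hfy) h₂ h
  · rw [E.dom_comp _ _ h₂, E.dom_res y f hf hfy]

/-- `f|(x ∘ y) = f|x ∘ D(f|x)|y`. -/
theorem cores_comp {x y f : C} (h : E.dom x = E.cod y) (hf : f ∈ E.obj)
    (hfx : E.lel f (E.cod x)) :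
    E.cores f (E.comp x y) = E.comp (E.cores f x) (E.cores (E.dom (E.cores f x)) y) := by
  have h₁ : E.lel (E.dom (E.cores f x)) (E.cod y) := by
    rw [← h]; exact E.lel_dom _ _ (E.cores_le f x hf hfx)
  have h₂ := E.cod_cores _ y (E.dom_mem (E.cores f x)) h₁
  refine (E.cores_unique f _ _ hf ?_ ?_ ?_).symm
  · rwa [E.cod_comp x y h]
  · exact E.lel_comp _ _ _ _ (E.cores_le f x hf hfx) (E.cores_le _ y (E.dom_mem _) h₁) h₂.symm h
  · rw [E.cod_comp _ _ h₂.symm, E.cod_cores f x hf hfx]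

theorem res_res {x e f : C} (he : e ∈ E.obj) (hf : f ∈ E.obj) (hex : E.ler e (E.dom x))
    (hfe : E.ler f e) : E.res (E.res x e) f = E.res x f := by
  have hd := E.dom_res x e he hex
  have hfd : E.ler f (E.dom (E.res x e)) := by rwa [hd]
  exact E.res_unique x f _ hf (E.ler_trans _ _ _ hfe hex)
    (E.ler_trans _ _ _ (E.res_le _ f hf hfd) (E.res_le x e he hex)) (E.dom_res _ f hf hfd)

theorem cores_cores {x e f : C} (he : e ∈ E.obj) (hf : f ∈ E.obj) (hex : E.lel e (E.cod x))
    (hfe : E.lel f e) : E.cores f (E.cores e x) = E.cores f x := by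
  have hd := E.cod_cores e x he hex
  have hfd : E.lel f (E.cod (E.cores e x)) := by rwa [hd]
  exact E.cores_unique f x _ hf (E.lel_trans _ _ _ hfe hex)
    (E.lel_trans _ _ _ (E.cores_le f _ hf hfd) (E.cores_le e x he hex)) (E.cod_cores f _ hf hfd)

theorem res_dom (x : C) : E.res x (E.dom x) = x :=
  (E.res_unique x _ x (E.dom_mem x) (E.ler_refl _) (E.ler_refl _) rfl).symm

theorem cores_cod (x : C) : E.cores (E.cod x) x = x :=
  (E.cores_unique _ x x (E.cod_mem x) (E.lel_refl _) (E.lel_refl _) rfl).symm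

theorem res_obj {e f : C} (he : e ∈ E.obj) (hf : f ∈ E.obj) (h : E.ler f e) : E.res e f = f :=
  (E.res_unique e f f hf (by rwa [E.dom_obj e he]) h (E.dom_obj f hf)).symm

theorem cores_obj {e f : C} (he : e ∈ E.obj) (hf : f ∈ E.obj) (h : E.lel f e) :
    E.cores f e = f :=
  (E.cores_unique f e f hf (by rwa [E.cod_obj e he]) h (E.cod_obj f hf)).symm

/-! ### The pseudo-product -/

/-- For `e = D(x) ∧ R(y)`, everything needed to form `x|e` and `e|y`. -/
theorem mid {x y : C} (h : E.pdef x y) :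
    E.meet (E.dom x) (E.cod y) ∈ E.obj ∧
    E.ler (E.meet (E.dom x) (E.cod y)) (E.dom x) ∧
    E.lel (E.meet (E.dom x) (E.cod y)) (E.cod y) ∧
    E.dom (E.res x (E.meet (E.dom x) (E.cod y))) = E.meet (E.dom x) (E.cod y) ∧
    E.cod (E.cores (E.meet (E.dom x) (E.cod y)) y) = E.meet (E.dom x) (E.cod y) := by
  have hx := E.dom_mem x
  have hy := E.cod_mem y
  have he := E.meet_mem _ _ hx hy h
  have h₁ := E.meet_ler_left hx hy h
  have h₂ := (E.lel_iff_ler he hy).2 (E.meet_ler_right hx hy h)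
  exact ⟨he, h₁, h₂, E.dom_res _ _ he h₁, E.cod_cores _ _ he h₂⟩

theorem dom_pprod {x y : C} (h : E.pdef x y) :
    E.dom (E.pprod x y) = E.dom (E.cores (E.meet (E.dom x) (E.cod y)) y) := by
  obtain ⟨-, -, -, h₁, h₂⟩ := E.mid h
  exact E.dom_comp _ _ (h₁.trans h₂.symm)

theorem cod_pprod {x y : C} (h : E.pdef x y) :
    E.cod (E.pprod x y) = E.cod (E.res x (E.meet (E.dom x) (E.cod y))) := by
  obtain ⟨-, -, -, h₁, h₂⟩ := E.mid h
  exact E.cod_comp _ _ (h₁.trans h₂.symm)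

theorem mdef_dom_pprod {x y : C} (h : E.pdef x y) : E.mdef (E.dom (E.pprod x y)) (E.dom y) := by
  obtain ⟨he, -, h₂, -, -⟩ := E.mid h
  rw [E.dom_pprod h]
  exact ((E.ec4l _ _ (E.dom_mem _) (E.dom_mem _)).1 (E.lel_dom _ _ (E.cores_le _ _ he h₂))).1

theorem mdef_cod_pprod {x y : C} (h : E.pdef x y) : E.mdef (E.cod (E.pprod x y)) (E.cod x) := by
  obtain ⟨he, h₁, -, -, -⟩ := E.mid h
  rw [E.cod_pprod h]
  exact E.mdef_of_ler (E.cod_mem _) (E.cod_mem _) (E.ler_cod _ _ (E.res_le _ _ he h₁))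

theorem pdef_pprod_left {x y z : C} (h : E.pdef x y) :
    E.pdef (E.pprod x y) z ↔ E.pdef y z := by
  have h' := E.mdef_dom_pprod h
  exact ⟨E.mdef_trans (E.dom_mem _) (E.dom_mem _) (E.cod_mem _)
      (E.mdef_comm _ _ (E.dom_mem _) (E.dom_mem _) h'),
    E.mdef_trans (E.dom_mem _) (E.dom_mem _) (E.cod_mem _) h'⟩

theorem pdef_pprod_right {x y z : C} (h : E.pdef y z) :
    E.pdef x (E.pprod y z) ↔ E.pdef x y := by
  have hc := E.mdef_cod_pprod h
  exact ⟨fun k => E.mdef_trans (E.dom_mem _) (E.cod_mem _) (E.cod_mem _) k hc,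
    fun k => E.mdef_trans (E.dom_mem _) (E.cod_mem _) (E.cod_mem _) k
      (E.mdef_comm _ _ (E.cod_mem _) (E.cod_mem _) hc)⟩

/-- Restricting and corestricting `y` along given objects `a` and `c` commute: with
`e = a ∧ R(y)` and `h = D(y) ∧ c`, one has
`(e|y)|(D(e|y) ∧ c) = (a ∧ R(y|h))|(y|h)`. -/
theorem middle_eq {a c y : C} (ha : a ∈ E.obj) (hc : c ∈ E.obj)
    (hay : E.mdef a (E.cod y)) (hyc : E.mdef (E.dom y) c) :
    E.res (E.cores (E.meet a (E.cod y)) y)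
        (E.meet (E.dom (E.cores (E.meet a (E.cod y)) y)) c) =
      E.cores (E.meet a (E.cod (E.res y (E.meet (E.dom y) c))))
        (E.res y (E.meet (E.dom y) c)) := by
  have hRy := E.cod_mem y
  have hDy := E.dom_mem y
  have he := E.meet_mem a _ ha hRy hay
  have hea := E.meet_ler_left ha hRy hay
  have hey := (E.lel_iff_ler he hRy).2 (E.meet_ler_right ha hRy hay)
  have hh := E.meet_mem _ c hDy hc hyc
  have hhc := E.meet_ler_right hDy hc hyc
  have hhy := E.meet_ler_left hDy hc hyc
  set e := E.meet a (E.cod y)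
  set h := E.meet (E.dom y) c
  set b := E.cores e y with hb
  set v := E.res y h with hv
  have hby : E.lel b y := E.cores_le e y he hey
  have hvy : E.ler v y := E.res_le y h hh hhy
  have hDb := E.dom_mem b
  have hRv := E.cod_mem v
  have hbc : E.mdef (E.dom b) c := E.mdef_trans hDb hDy hc
    ((E.ec4l _ _ hDb hDy).1 (E.lel_dom _ _ hby)).1 hyc
  have hav : E.mdef a (E.cod v) := E.mdef_trans ha hRy hRv hay
    (E.mdef_comm _ _ hRv hRy (E.mdef_of_ler hRv hRy (E.ler_cod _ _ hvy)))
  have h6 := E.ec6 b y c hc hby hbc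
  have h7 := E.ec7 v y a ha hvy hav
  have hf := E.meet_mem _ c hDb hc hbc
  have hfb := E.meet_ler_left hDb hc hbc
  have hk := E.meet_mem a _ ha hRv hav
  have hkv := (E.lel_iff_ler hk hRv).2 (E.meet_ler_right ha hRv hav)
  change E.lel _ v at h6
  change E.ler _ b at h7
  set f := E.meet (E.dom b) c
  set k := E.meet a (E.cod v)
  set p := E.res b f with hp
  set q := E.cores k v with hq
  have hpb : E.ler p b := E.res_le b f hf hfb
  have hqv : E.lel q v := E.cores_le k v hk hkv
  have hRq : E.cod q = k := E.cod_cores k v hk hkv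
  have hRp := E.cod_mem p
  -- `g = R(p) ≤ a ∧ R(v) = k`
  have hgk : E.ler (E.cod p) k := by
    refine E.ler_meet hRp ha hRv hav ?_ ?_
    · have h₁ := E.ler_cod _ _ hpb
      rw [hb, E.cod_cores e y he hey] at h₁
      exact E.ler_trans _ _ _ h₁ hea
    · exact (E.lel_iff_ler hRp hRv).1 (E.lel_cod _ _ h6)
  -- `m = D(q) ≤ D(b) ∧ c = f`
  have hmf : E.ler (E.dom q) f := by
    refine E.ler_meet (E.dom_mem q) hDb hc hbc (E.ler_dom _ _ h7) ?_
    have h₁ := (E.lel_iff_ler (E.dom_mem _) (E.dom_mem _)).1 (E.lel_dom _ _ hqv)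
    rw [hv, E.dom_res y h hh hhy] at h₁
    exact E.ler_trans _ _ _ h₁ hhc
  -- `q = b|m = (b|f)|m ≤_r p`
  have hqp : E.ler q p := by
    have h₁ : q = E.res b (E.dom q) :=
      E.res_unique b _ q (E.dom_mem q) (E.ler_dom _ _ h7) h7 rfl
    rw [h₁, ← E.res_res hf (E.dom_mem q) hfb hmf]
    refine E.res_le _ _ (E.dom_mem q) ?_
    rwa [E.dom_res b f hf hfb]
  have hgk' : E.cod p = k := by
    refine E.ler_antisymm _ _ hgk ?_
    rw [← hRq]
    exact E.ler_cod _ _ hqp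
  exact E.cores_unique k v p hk hkv h6 hgk'

theorem pprod_assoc {x y z : C} (hxy : E.pdef x y) (hyz : E.pdef y z) :
    E.pprod (E.pprod x y) z = E.pprod x (E.pprod y z) := by
  have hl : E.pdef (E.pprod x y) z := (E.pdef_pprod_left hxy).2 hyz
  have hr : E.pdef x (E.pprod y z) := (E.pdef_pprod_right hyz).2 hxy
  have hM := E.middle_eq (E.dom_mem x) (E.cod_mem z) hxy hyz
  obtain ⟨he, hex, hey, hxe, hye⟩ := E.mid hxy
  obtain ⟨hh, hhy, hhz, hyh, hzh⟩ := E.mid hyz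
  obtain ⟨hf, hfx, hfz, -, hzf⟩ := E.mid hl
  obtain ⟨hk, hkx, hky, hxk, -⟩ := E.mid hr
  have hfh : E.lel (E.meet (E.dom (E.pprod x y)) (E.cod z)) (E.meet (E.dom y) (E.cod z)) := by
    rw [E.lel_iff_ler hf hh]
    refine E.ler_meet hf (E.dom_mem y) (E.cod_mem z) hyz (E.ler_trans _ _ _ hfx ?_)
      ((E.lel_iff_ler hf (E.cod_mem z)).1 hfz)
    rw [E.dom_pprod hxy, ← E.lel_iff_ler (E.dom_mem _) (E.dom_mem _)]
    exact E.lel_dom _ _ (E.cores_le _ _ he hey)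
  rw [pprod, pprod.eq_def E x (E.pprod y z)]
  rw [E.dom_pprod hxy] at hf hfx hfz hzf hfh ⊢
  rw [E.cod_pprod hyz] at hk hkx hky hxk ⊢
  rw [pprod, pprod]
  set e := E.meet (E.dom x) (E.cod y)
  set h := E.meet (E.dom y) (E.cod z)
  set b := E.cores e y
  set v := E.res y h
  set f := E.meet (E.dom b) (E.cod z)
  set k := E.meet (E.dom x) (E.cod v)
  have hpf : E.dom (E.res b f) = f := E.dom_res b f hf hfx
  have hqk : E.cod (E.cores k v) = k := E.cod_cores k v hk hky
  have hke : E.ler k e := by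
    have h₁ := E.ler_cod _ _ (E.res_le b f hf hfx)
    rwa [hM, hqk, hye] at h₁
  rw [E.res_comp (hxe.trans hye.symm) hf hfx, E.cores_comp (hyh.trans hzh.symm) hk hky, ← hM, hpf,
    E.cores_cores hh hf hhz hfh, hM, hqk, E.res_res he hk hex hke]
  refine E.comp_assoc _ _ _ ?_ ?_
  · rw [hqk]; exact hxk
  · rw [← hM, hpf, hzf]

theorem pprod_obj_left {e y : C} (he : e ∈ E.obj) (h : E.mdef e (E.cod y)) :
    E.pprod e y = E.cores (E.meet e (E.cod y)) y := by
  have h' : E.pdef e y := by rwa [pdef, E.dom_obj e he]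
  obtain ⟨hm, h₁, -, -, h₂⟩ := E.mid h'
  rw [E.dom_obj e he] at hm h₁ h₂
  rw [pprod, E.dom_obj e he, E.res_obj he hm h₁]
  exact E.id_comp _ _ hm h₂

theorem pprod_obj_right {x e : C} (he : e ∈ E.obj) (h : E.mdef (E.dom x) e) :
    E.pprod x e = E.res x (E.meet (E.dom x) e) := by
  have h' : E.pdef x e := by rwa [pdef, E.cod_obj e he]
  obtain ⟨hm, -, h₁, h₂, -⟩ := E.mid h'
  rw [E.cod_obj e he] at hm h₁ h₂
  rw [pprod, E.cod_obj e he, E.cores_obj he hm h₁]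
  exact E.comp_id _ _ hm h₂

theorem pdef_obj {e f : C} (he : e ∈ E.obj) (hf : f ∈ E.obj) : E.pdef e f ↔ E.mdef e f := by
  rw [pdef, E.dom_obj e he, E.cod_obj f hf]

theorem pprod_obj {e f : C} (he : e ∈ E.obj) (hf : f ∈ E.obj) (h : E.mdef e f) :
    E.pprod e f = E.meet e f := by
  have hm := E.meet_mem e f he hf h
  rw [E.pprod_obj_left he (by rwa [E.cod_obj f hf]), E.cod_obj f hf]
  exact E.cores_obj hf hm ((E.lel_iff_ler hm hf).2 (E.meet_ler_right he hf h))

theorem pprod_obj_comm {e f : C} (he : e ∈ E.obj) (hf : f ∈ E.obj) (h : E.pdef e f) :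
    E.pdef f e ∧ E.pprod e f = E.pprod f e := by
  rw [E.pdef_obj he hf] at h
  have h' := E.mdef_comm e f he hf h
  rw [E.pdef_obj hf he, E.pprod_obj he hf h, E.pprod_obj hf he h']
  exact ⟨h', E.meet_comm e f he hf h⟩

/-- The two-sided Ehresmann semigroupoid `S(C)`. -/
def toEhresmannSgpd : EhresmannSgpd C where
  defined := E.pdef
  mul := E.pprod
  assoc₁ _ _ _ h₁ h₂ :=
    ⟨(E.pdef_pprod_left h₁).2 h₂, (E.pdef_pprod_right h₂).2 h₁, E.pprod_assoc h₁ h₂⟩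
  assoc₂ _ _ _ h₁ h₂ :=
    have h₃ := (E.pdef_pprod_left h₁).1 h₂
    ⟨h₃, (E.pdef_pprod_right h₃).2 h₁, E.pprod_assoc h₁ h₃⟩
  assoc₃ _ _ _ h₁ h₂ :=
    have h₃ := (E.pdef_pprod_right h₁).1 h₂
    ⟨h₃, (E.pdef_pprod_left h₃).2 h₁, E.pprod_assoc h₃ h₁⟩
  plus := E.cod
  star := E.dom
  le1 s := by
    have hs := E.cod_mem s
    refine ⟨?_, ?_⟩
    · rw [pdef, E.dom_obj _ hs]; exact E.mdef_self _ hs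
    · rw [E.pprod_obj_left hs (E.mdef_self _ hs), E.meet_self _ hs, E.cores_cod]
  le2 s t h := E.pprod_obj_comm (E.cod_mem s) (E.cod_mem t) h
  le3 s t h := by
    have hs := E.cod_mem s
    have ht := E.cod_mem t
    rw [E.pdef_obj hs ht] at h
    have hm := E.meet_mem _ _ hs ht h
    rw [E.pprod_obj hs ht h, E.pprod_obj_left hs h, E.cod_cores _ _ hm
      ((E.lel_iff_ler hm ht).2 (E.meet_ler_right hs ht h))]
  le4 s t h := by
    rw [E.cod_pprod h, E.pprod_obj_right (E.cod_mem t) h]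
  re1 s := by
    have hs := E.dom_mem s
    refine ⟨?_, ?_⟩
    · rw [pdef, E.cod_obj _ hs]; exact E.mdef_self _ hs
    · rw [E.pprod_obj_right hs (E.mdef_self _ hs), E.meet_self _ hs, E.res_dom]
  re2 s t h := E.pprod_obj_comm (E.dom_mem s) (E.dom_mem t) h
  re3 s t h := by
    have hs := E.dom_mem s
    have ht := E.dom_mem t
    rw [E.pdef_obj hs ht] at h
    rw [E.pprod_obj hs ht h, E.pprod_obj_right ht h,
      E.dom_res _ _ (E.meet_mem _ _ hs ht h) (E.meet_ler_left hs ht h)]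
  re4 s t h := by
    rw [E.dom_pprod h, E.pprod_obj_left (E.dom_mem s) h]
  plus_star s := E.dom_obj _ (E.cod_mem s)
  star_plus s := E.cod_obj _ (E.dom_mem s)

end LBEC

/-- For every local biordered Ehresmann category `C`, the data `S(C)`
(underlying set `C`, product the pseudo-product `⊗`, `x⁺ = R(x)`, `x* = D(x)`) is a
two-sided Ehresmann semigroupoid. -/
theorem stmt9 {C : Type u} (Cat : LBEC C) :
    ∃ E : EhresmannSgpd C, IsSofC Cat E := by
  exact ⟨Cat.toEhresmannSgpd, rfl, fun _ _ _ => rfl, rfl, rfl⟩
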